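/- arXiv:math/0507071 — 4 statements merged into one kernel-verified Lean document; each statement's English description precedes it below -/
import Mathlib

section
/- Let γ : ℤ₊² → ℝ, let u ∈ ℤ₊² with γ_u > 0, and let k ≥ 1. Then the real matrix (γ_{u+(m,n)+(p,q)})_{0≤p+q≤k, 0≤m+n≤k} (rows indexed by pairs (m,n) with 0 ≤ m+n ≤ k, columns by pairs (p,q) with 0 ≤ p+q ≤ k) is positive semidefinite if and only if the matrix (γ_u γ_{u+(m,n)+(p,q)} − γ_{u+(m,n)} γ_{u+(p,q)})_{1≤p+q≤k, 1≤m+n≤k} is positive semidefinite. -/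
noncomputable section

/-- The index set `{(m, n) : 1 ≤ m + n ≤ k}`. -/
def idx (k : ℕ) : Finset (ℕ × ℕ) :=
  (Finset.range (k + 1) ×ˢ Finset.range (k + 1)).filter fun p => 1 ≤ p.1 + p.2 ∧ p.1 + p.2 ≤ k

/-- The index set `{(m, n) : 0 ≤ m + n ≤ k}`. -/
def idx0 (k : ℕ) : Finset (ℕ × ℕ) :=
  (Finset.range (k + 1) ×ˢ Finset.range (k + 1)).filter fun p => p.1 + p.2 ≤ k

theorem zero_notMem_idx (k : ℕ) : (0 : ℕ × ℕ) ∉ idx k := by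
  simp [idx]

theorem idx0_eq (k : ℕ) : idx0 k = insert 0 (idx k) := by
  ext ⟨a, b⟩
  simp only [idx0, idx, Finset.mem_filter, Finset.mem_product, Finset.mem_range,
    Finset.mem_insert, Prod.mk_eq_zero]
  omega

/-- Completing the square. -/
theorem key_identity (γ : ℕ × ℕ → ℝ) (u : ℕ × ℕ) (k : ℕ) (c : ℕ × ℕ → ℝ) :
    γ u * (∑ mn ∈ idx0 k, ∑ pq ∈ idx0 k, c mn * γ (u + mn + pq) * c pq) =
      (c 0 * γ u + ∑ mn ∈ idx k, c mn * γ (u + mn)) ^ 2 +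
      ∑ mn ∈ idx k, ∑ pq ∈ idx k,
          c mn * (γ u * γ (u + mn + pq) - γ (u + mn) * γ (u + pq)) * c pq := by
  have h0 := zero_notMem_idx k
  have h1 : ∑ mn ∈ idx k, ∑ pq ∈ idx k,
      c mn * (γ u * γ (u + mn + pq) - γ (u + mn) * γ (u + pq)) * c pq =
      γ u * (∑ mn ∈ idx k, ∑ pq ∈ idx k, c mn * γ (u + mn + pq) * c pq) -
      (∑ mn ∈ idx k, c mn * γ (u + mn)) * (∑ mn ∈ idx k, c mn * γ (u + mn)) := by
    rw [Finset.sum_mul_sum, Finset.mul_sum, ← Finset.sum_sub_distrib]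
    refine Finset.sum_congr rfl fun a _ => ?_
    rw [Finset.mul_sum, ← Finset.sum_sub_distrib]
    refine Finset.sum_congr rfl fun b _ => ?_
    ring
  have h2 : ∑ pq ∈ idx k, c 0 * γ (u + pq) * c pq =
      c 0 * ∑ mn ∈ idx k, c mn * γ (u + mn) := by
    rw [Finset.mul_sum]
    exact Finset.sum_congr rfl fun b _ => by ring
  have h3 : ∑ mn ∈ idx k, c mn * γ (u + mn) * c 0 =
      (∑ mn ∈ idx k, c mn * γ (u + mn)) * c 0 := by
    rw [Finset.sum_mul]
  rw [h1, idx0_eq, Finset.sum_insert h0]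
  simp only [Finset.sum_insert h0, Finset.sum_add_distrib, add_zero]
  rw [h2, h3]
  ring

/-- Let `γ : ℤ₊² → ℝ`, `u ∈ ℤ₊²` with `γ_u > 0`, and `k ≥ 1`.  The matrix
`(γ_{u+(m,n)+(p,q)})_{0≤p+q≤k, 0≤m+n≤k}` is positive semidefinite iff the matrix
`(γ_u γ_{u+(m,n)+(p,q)} − γ_{u+(m,n)} γ_{u+(p,q)})_{1≤p+q≤k, 1≤m+n≤k}` is positive
semidefinite. -/
theorem moment_matrix_psd_iff_localized_psd (γ : ℕ × ℕ → ℝ) (u : ℕ × ℕ)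
    (hu : 0 < γ u) (k : ℕ) (hk : 1 ≤ k) :
    (∀ c : ℕ × ℕ → ℝ,
        0 ≤ ∑ mn ∈ idx0 k, ∑ pq ∈ idx0 k, c mn * γ (u + mn + pq) * c pq) ↔
      (∀ c : ℕ × ℕ → ℝ,
        0 ≤ ∑ mn ∈ idx k, ∑ pq ∈ idx k,
          c mn * (γ u * γ (u + mn + pq) - γ (u + mn) * γ (u + pq)) * c pq) := by
  constructor
  · intro h c
    set L := ∑ mn ∈ idx k, c mn * γ (u + mn) with hL
    have hne : ∀ x ∈ idx k, Function.update c 0 (-L / γ u) x = c x := by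
      intro x hx
      refine Function.update_of_ne ?_ _ _
      rintro rfl
      exact zero_notMem_idx k hx
    have hid := key_identity γ u k (Function.update c 0 (-L / γ u))
    have e1 : ∑ mn ∈ idx k, Function.update c 0 (-L / γ u) mn * γ (u + mn) = L :=
      Finset.sum_congr rfl fun x hx => by rw [hne x hx]
    have e2 : ∑ mn ∈ idx k, ∑ pq ∈ idx k, Function.update c 0 (-L / γ u) mn *
          (γ u * γ (u + mn + pq) - γ (u + mn) * γ (u + pq)) *
          Function.update c 0 (-L / γ u) pq =
        ∑ mn ∈ idx k, ∑ pq ∈ idx k,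
          c mn * (γ u * γ (u + mn + pq) - γ (u + mn) * γ (u + pq)) * c pq :=
      Finset.sum_congr rfl fun x hx => Finset.sum_congr rfl fun y hy => by
        rw [hne x hx, hne y hy]
    rw [e1, e2, Function.update_self, div_mul_cancel₀ _ hu.ne', neg_add_cancel] at hid
    have := mul_nonneg hu.le (h (Function.update c 0 (-L / γ u)))
    rw [hid] at this
    simpa using this
  · intro h c
    refine nonneg_of_mul_nonneg_right ?_ hu
    rw [key_identity]
    exact add_nonneg (sq_nonneg _) (h c)
end
end

section
/- For 0 < y ≤ 1, define x₀ := y√(3/4) and xₙ := √((n+1)(n+3))/(n+2) for n ≥ 1. Then the unilateral weighted shift W_x on ℓ²(ℤ₊) with weight sequence (x₀,x₁,x₂,…) is subnormal; moreover, the measure μ_x := (1−y²)δ₀ + (y²/2)λ + (y²/2)δ₁ on [0,1] (δ denotes Dirac measure, λ Lebesgue measure on [0,1]) is a probability measure satisfying ∫ sⁿ dμ_x(s) = x₀²x₁²⋯x_{n−1}² for every integer n ≥ 1. -/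
open ContinuousLinearMap MeasureTheory

noncomputable section

/-- The Hilbert space `ℓ²(ℤ₊)`. -/
abbrev ℓ2 : Type := lp (fun _ : ℕ => ℂ) 2

/-- The canonical orthonormal basis vector `eₙ` of `ℓ²(ℤ₊)`. -/
def e (n : ℕ) : ℓ2 := lp.single 2 n 1

/-- A bounded operator `W` on a complex Hilbert space is *subnormal* if there are a complex
Hilbert space `K`, a linear isometry `V : H → K` and a normal bounded operator `N` on `K`
with `N V = V W` (so that the range of `V` is invariant under `N`). -/
def SubnormalOp {H : Type} [NormedAddCommGroup H] [InnerProductSpace ℂ H] [CompleteSpace H]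
    (W : H →L[ℂ] H) : Prop :=
  ∃ (K : Type) (_ : NormedAddCommGroup K) (_ : InnerProductSpace ℂ K) (_ : CompleteSpace K)
    (N : K →L[ℂ] K) (V : H →ₗᵢ[ℂ] K),
    (adjoint N ∘L N = N ∘L adjoint N) ∧ (∀ x, N (V x) = V (W x))

/-- The weight sequence `x₀ = y√(3/4)`, `xₙ = √((n+1)(n+3))/(n+2)` for `n ≥ 1`. -/
def xseq (y : ℝ) : ℕ → ℝ
  | 0 => y * Real.sqrt (3 / 4)
  | n + 1 => Real.sqrt (((n : ℝ) + 2) * ((n : ℝ) + 4)) / ((n : ℝ) + 3)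

/-- The measure `μ_x = (1−y²)δ₀ + (y²/2)λ + (y²/2)δ₁` on `[0,1]`
(`δ` Dirac measures, `λ` Lebesgue measure on `[0,1]`). -/
def mux (y : ℝ) : Measure ℝ :=
  ENNReal.ofReal (1 - y ^ 2) • Measure.dirac 0 +
    ENNReal.ofReal (y ^ 2 / 2) • volume.restrict (Set.Icc (0 : ℝ) 1) +
    ENNReal.ofReal (y ^ 2 / 2) • Measure.dirac 1

/-! ### The moment computation -/

lemma xseq_zero_sq (y : ℝ) : xseq y 0 ^ 2 = 3 * y ^ 2 / 4 := by
  simp only [xseq, mul_pow]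
  rw [Real.sq_sqrt (by norm_num)]
  ring

lemma xseq_succ_sq (y : ℝ) (n : ℕ) :
    xseq y (n + 1) ^ 2 = (((n : ℝ) + 2) * ((n : ℝ) + 4)) / ((n : ℝ) + 3) ^ 2 := by
  simp only [xseq, div_pow]
  rw [Real.sq_sqrt (by positivity)]

lemma prod_xseq (y : ℝ) (n : ℕ) :
    ∏ i ∈ Finset.range (n + 1), xseq y i ^ 2
      = y ^ 2 / 2 * (((n : ℝ) + 3) / ((n : ℝ) + 2)) := by
  induction n with
  | zero => simp [xseq_zero_sq]; ring
  | succ k ih =>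
    rw [Finset.prod_range_succ, ih, xseq_succ_sq]
    push_cast
    have h1 : (k : ℝ) + 2 ≠ 0 := by positivity
    have h2 : (k : ℝ) + 3 ≠ 0 := by positivity
    have h3 : (k : ℝ) + 1 + 2 ≠ 0 := by positivity
    field_simp
    ring

lemma mux_prob (y : ℝ) (hy : 0 < y) (hy' : y ≤ 1) : IsProbabilityMeasure (mux y) := by
  constructor
  have h : 0 ≤ 1 - y ^ 2 := by nlinarith
  simp only [mux, Measure.add_apply, Measure.smul_apply, Measure.dirac_apply_of_mem (Set.mem_univ _),
    Measure.restrict_apply_univ, Real.volume_Icc, smul_eq_mul]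
  simp only [sub_zero, ENNReal.ofReal_one, mul_one]
  rw [← ENNReal.ofReal_add h (by positivity), ← ENNReal.ofReal_add (by positivity) (by positivity),
    ← ENNReal.ofReal_one]
  congr 1
  ring

lemma mux_moment (y : ℝ) (hy' : y ^ 2 ≤ 1) (n : ℕ) :
    ∫ s, s ^ n ∂(mux y) = ∏ i ∈ Finset.range n, (xseq y i) ^ 2 := by
  have hc : Continuous fun s : ℝ => s ^ n := by fun_prop
  have i1 : Integrable (fun s : ℝ => s ^ n) (ENNReal.ofReal (1 - y ^ 2) • Measure.dirac 0) :=
    (integrable_dirac (by simp)).smul_measure (by simp)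
  have i2 : Integrable (fun s : ℝ => s ^ n)
      (ENNReal.ofReal (y ^ 2 / 2) • volume.restrict (Set.Icc (0 : ℝ) 1)) :=
    Integrable.smul_measure (hc.continuousOn.integrableOn_compact isCompact_Icc) (by simp)
  have i3 : Integrable (fun s : ℝ => s ^ n) (ENNReal.ofReal (y ^ 2 / 2) • Measure.dirac 1) :=
    (integrable_dirac (by simp)).smul_measure (by simp)
  rw [mux, integral_add_measure (i1.add_measure i2) i3, integral_add_measure i1 i2,
    integral_smul_measure, integral_smul_measure, integral_smul_measure, integral_dirac,
    integral_dirac, integral_Icc_eq_integral_Ioc, ← intervalIntegral.integral_of_le zero_le_one,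
    integral_pow, ENNReal.toReal_ofReal (by linarith), ENNReal.toReal_ofReal (by positivity)]
  cases n with
  | zero => simp; ring
  | succ k =>
    rw [prod_xseq]
    have h1 : (k : ℝ) + 2 ≠ 0 := by positivity
    have h3 : (k : ℝ) + 1 + 1 ≠ 0 := by positivity
    simp
    field_simp
    ring

lemma mux_ae (y : ℝ) : ∀ᵐ s ∂(mux y), s ∈ Set.Icc (0 : ℝ) 1 := by
  simp only [mux, ae_add_measure_iff]
  refine ⟨⟨Measure.ae_smul_measure ?_ _, Measure.ae_smul_measure ?_ _⟩,
    Measure.ae_smul_measure ?_ _⟩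
  · exact (ae_dirac_iff measurableSet_Icc).2 (by simp)
  · exact ae_restrict_mem measurableSet_Icc
  · exact (ae_dirac_iff measurableSet_Icc).2 (by simp)

lemma xseq_pos (y : ℝ) (hy : 0 < y) (n : ℕ) : 0 < xseq y n := by
  cases n with
  | zero => simp only [xseq]; positivity
  | succ k => simp only [xseq]; positivity

/-! ### Multiplication operators -/

section Mult

variable {X : Type} [MeasurableSpace X] (μ : Measure X)

/-- Multiplication by an essentially bounded function on `L²`. -/
def mulOp {g : X → ℂ} (hg : MemLp g ⊤ μ) : Lp ℂ 2 μ →L[ℂ] Lp ℂ 2 μ :=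
  (ContinuousLinearMap.mul ℂ ℂ).holderL μ ⊤ 2 2 (hg.toLp g)

lemma mulOp_coe {g : X → ℂ} (hg : MemLp g ⊤ μ) (f : Lp ℂ 2 μ) :
    mulOp μ hg f =ᵐ[μ] fun x => g x * f x := by
  have h1 := (ContinuousLinearMap.mul ℂ ℂ).coeFn_holder (r := 2) (hg.toLp g) f
  have h2 := hg.coeFn_toLp
  filter_upwards [h1, h2] with x hx hx'
  simp only [mulOp, ContinuousLinearMap.holderL_apply_apply]
  rw [hx, hx']
  simp

lemma mulOp_adjoint {g : X → ℂ} (hg : MemLp g ⊤ μ) (hg' : MemLp (fun x => star (g x)) ⊤ μ) :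
    adjoint (mulOp μ hg) = mulOp μ hg' := by
  symm
  rw [ContinuousLinearMap.eq_adjoint_iff]
  intro f h
  rw [L2.inner_def, L2.inner_def]
  apply integral_congr_ae
  filter_upwards [mulOp_coe μ hg h, mulOp_coe μ hg' f] with x h1 h2
  rw [h1, h2]
  simp
  ring

lemma mulOp_normal {g : X → ℂ} (hg : MemLp g ⊤ μ) :
    adjoint (mulOp μ hg) ∘L mulOp μ hg = mulOp μ hg ∘L adjoint (mulOp μ hg) := by
  have hg' : MemLp (fun x => star (g x)) ⊤ μ := hg.star
  rw [mulOp_adjoint μ hg hg']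
  ext1 f
  apply Lp.ext
  simp only [ContinuousLinearMap.comp_apply]
  filter_upwards [mulOp_coe μ hg f, mulOp_coe μ hg' f, mulOp_coe μ hg (mulOp μ hg' f),
    mulOp_coe μ hg' (mulOp μ hg f)] with x h1 h2 h3 h4
  rw [h3, h4, h1, h2]
  ring

end Mult

/-! ### The model -/

/-- The underlying measure of the model space. -/
abbrev nu (y : ℝ) : Measure (ℝ × UnitAddCircle) := (mux y).prod AddCircle.haarAddCircle

/-- The multiplier. -/
def gfun (p : ℝ × UnitAddCircle) : ℂ := (Real.sqrt (min 1 p.1) : ℂ) * fourier 1 p.2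

lemma gfun_cont : Continuous gfun := by
  unfold gfun
  fun_prop

lemma gfun_norm (p : ℝ × UnitAddCircle) : ‖gfun p‖ ≤ 1 := by
  have h : ‖fourier 1 p.2‖ = 1 := by rw [fourier_apply]; exact Circle.norm_coe _
  rw [gfun, norm_mul, h, mul_one, Complex.norm_real, Real.norm_of_nonneg (Real.sqrt_nonneg _)]
  exact Real.sqrt_le_one.2 (min_le_left _ _)

lemma gfun_pow (n : ℕ) (p : ℝ × UnitAddCircle) :
    gfun p ^ n = ((Real.sqrt (min 1 p.1) ^ n : ℝ) : ℂ) * fourier n p.2 := by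
  simp [gfun, mul_pow, fourier_apply, AddCircle.toCircle_nsmul]

lemma gfun_memLp (y : ℝ) (hy : IsProbabilityMeasure (mux y)) : MemLp gfun ⊤ (nu y) :=
  memLp_top_of_bound gfun_cont.aestronglyMeasurable 1 (.of_forall gfun_norm)

lemma gpow_memLp (y : ℝ) (hy : IsProbabilityMeasure (mux y)) (c : ℂ) (n : ℕ) :
    MemLp (fun p => c * gfun p ^ n) 2 (nu y) := by
  refine MemLp.of_bound (gfun_cont.pow n |>.const_smul c).aestronglyMeasurable ‖c‖
    (.of_forall fun p => ?_)
  rw [norm_mul, norm_pow]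
  exact mul_le_of_le_one_right (norm_nonneg _) (pow_le_one₀ (norm_nonneg _) (gfun_norm p))

lemma integral_fourier_ite (k : ℤ) :
    ∫ t : UnitAddCircle, fourier k t ∂AddCircle.haarAddCircle = if k = 0 then 1 else 0 := by
  split_ifs with h
  · simp [h]
  · exact integral_eq_zero_of_add_right_eq_neg (μ := AddCircle.haarAddCircle)
      (fourier_add_half_inv_index h one_pos)

lemma integral_g (y : ℝ) (hy' : y ^ 2 ≤ 1) (hp : IsProbabilityMeasure (mux y)) (m n : ℕ) :
    ∫ p, star (gfun p ^ m) * gfun p ^ n ∂(nu y)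
      = if m = n then ((∏ i ∈ Finset.range n, (xseq y i) ^ 2 : ℝ) : ℂ) else 0 := by
  have h : ∀ p : ℝ × UnitAddCircle, star (gfun p ^ m) * gfun p ^ n
      = ((Real.sqrt (min 1 p.1) ^ (m + n) : ℝ) : ℂ) * fourier ((n : ℤ) + -(m : ℤ)) p.2 := by
    intro p
    rw [gfun_pow, gfun_pow, fourier_add, fourier_neg, star_mul', pow_add]
    simp only [RCLike.star_def, Complex.conj_ofReal]
    push_cast
    ring
  simp_rw [h]
  rw [integral_prod_mul (μ := mux y) (ν := AddCircle.haarAddCircle)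
    (fun s : ℝ => ((Real.sqrt (min 1 s) ^ (m + n) : ℝ) : ℂ)) (fun t => fourier ((n : ℤ) + -(m : ℤ)) t),
    integral_fourier_ite]
  by_cases hmn : m = n
  · subst hmn
    simp only [add_neg_cancel, if_true, mul_one]
    rw [integral_complex_ofReal, ← mux_moment y hy']
    congr 1
    apply integral_congr_ae
    filter_upwards [mux_ae y] with s hs
    rw [min_eq_right hs.2, ← two_mul, pow_mul, Real.sq_sqrt hs.1]
  · have : (n : ℤ) + -(m : ℤ) ≠ 0 := by omega
    simp [this, hmn]

/-- The orthonormal family of normalised powers. -/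
def vfam (y : ℝ) (hp : IsProbabilityMeasure (mux y)) (n : ℕ) : Lp ℂ 2 (nu y) :=
  (gpow_memLp y hp ((∏ i ∈ Finset.range n, xseq y i : ℝ) : ℂ)⁻¹ n).toLp _

lemma vfam_orthonormal (y : ℝ) (hy : 0 < y) (hy' : y ^ 2 ≤ 1)
    (hp : IsProbabilityMeasure (mux y)) : Orthonormal ℂ (vfam y hp) := by
  rw [orthonormal_iff_ite]
  intro m n
  rw [L2.inner_def]
  set a : ℕ → ℝ := fun n => ∏ i ∈ Finset.range n, xseq y i with ha
  have hpos : ∀ n, 0 < a n := fun n => Finset.prod_pos fun i _ => xseq_pos y hy i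
  have h : ∫ p, inner ℂ (vfam y hp m p) (vfam y hp n p) ∂(nu y)
      = ∫ p, (((a m : ℂ)⁻¹ * (a n : ℂ)⁻¹)) * (star (gfun p ^ m) * gfun p ^ n) ∂(nu y) := by
    apply integral_congr_ae
    filter_upwards [(gpow_memLp y hp (a m : ℂ)⁻¹ m).coeFn_toLp,
      (gpow_memLp y hp (a n : ℂ)⁻¹ n).coeFn_toLp] with p h1 h2
    have h1' : vfam y hp m p = (a m : ℂ)⁻¹ * gfun p ^ m := h1
    have h2' : vfam y hp n p = (a n : ℂ)⁻¹ * gfun p ^ n := h2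
    rw [h1', h2']
    simp only [RCLike.inner_apply, map_mul, map_inv₀, Complex.conj_ofReal, RCLike.star_def]
    ring
  rw [h, integral_const_mul, integral_g y hy' hp]
  split_ifs with hmn
  · subst hmn
    have : (a m : ℂ) ≠ 0 := by exact_mod_cast (hpos m).ne'
    rw [Finset.prod_pow]
    change (a m : ℂ)⁻¹ * (a m : ℂ)⁻¹ * ((a m ^ 2 : ℝ) : ℂ) = 1
    push_cast
    field_simp
  · simp

lemma mulOp_vfam (y : ℝ) (hy : 0 < y) (hp : IsProbabilityMeasure (mux y)) (n : ℕ) :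
    mulOp (nu y) (gfun_memLp y hp) (vfam y hp n) = (xseq y n : ℂ) • vfam y hp (n + 1) := by
  apply Lp.ext
  filter_upwards [mulOp_coe (nu y) (gfun_memLp y hp) (vfam y hp n),
    Lp.coeFn_smul (xseq y n : ℂ) (vfam y hp (n + 1)),
    (gpow_memLp y hp ((∏ i ∈ Finset.range n, xseq y i : ℝ) : ℂ)⁻¹ n).coeFn_toLp,
    (gpow_memLp y hp ((∏ i ∈ Finset.range (n + 1), xseq y i : ℝ) : ℂ)⁻¹ (n + 1)).coeFn_toLp]
    with p h1 h2 h3 h4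
  have h3' : vfam y hp n p = ((∏ i ∈ Finset.range n, xseq y i : ℝ) : ℂ)⁻¹ * gfun p ^ n := h3
  have h4' : vfam y hp (n + 1) p
    = ((∏ i ∈ Finset.range (n + 1), xseq y i : ℝ) : ℂ)⁻¹ * gfun p ^ (n + 1) := h4
  rw [h1, h2, Pi.smul_apply, h3', h4', Finset.prod_range_succ, smul_eq_mul]
  have : (xseq y n : ℂ) ≠ 0 := by exact_mod_cast (xseq_pos y hy n).ne'
  push_cast
  rw [mul_inv, pow_succ]
  field_simp

/-- For `0 < y ≤ 1`, the unilateral weighted shift `W_x` with weights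
`x₀ = y√(3/4)`, `xₙ = √((n+1)(n+3))/(n+2)` (`n ≥ 1`) is subnormal; moreover
`μ_x = (1−y²)δ₀ + (y²/2)λ + (y²/2)δ₁` is a probability measure whose `n`-th moment is
`x₀²x₁²⋯x_{n−1}²` for every `n ≥ 1`. -/
theorem shift_x_subnormal (y : ℝ) (hy : 0 < y) (hy' : y ≤ 1)
    (W : ℓ2 →L[ℂ] ℓ2) (hW : ∀ n : ℕ, W (e n) = ((xseq y n : ℂ)) • e (n + 1)) :
    SubnormalOp W ∧ IsProbabilityMeasure (mux y) ∧
      ∀ n : ℕ, 1 ≤ n →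
        ∫ s, s ^ n ∂(mux y) = ∏ i ∈ Finset.range n, (xseq y i) ^ 2 := by
  have hy2 : y ^ 2 ≤ 1 := by nlinarith
  have hp := mux_prob y hy hy'
  refine ⟨?_, hp, fun n _ => mux_moment y hy2 n⟩
  have hv := (vfam_orthonormal y hy hy2 hp)
  have hV := hv.orthogonalFamily
  refine ⟨Lp ℂ 2 (nu y), inferInstance, inferInstance, inferInstance,
    mulOp (nu y) (gfun_memLp y hp), hV.linearIsometry, mulOp_normal _ _, ?_⟩
  have hVe : ∀ n, hV.linearIsometry (e n) = vfam y hp n := by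
    intro n
    rw [e, hV.linearIsometry_apply_single]
    simp
  have key : (mulOp (nu y) (gfun_memLp y hp)) ∘L hV.linearIsometry.toContinuousLinearMap
      = hV.linearIsometry.toContinuousLinearMap ∘L W := by
    apply lp.ext_continuousLinearMap (by simp)
    intro n
    apply ContinuousLinearMap.ext_ring
    change mulOp (nu y) (gfun_memLp y hp) (hV.linearIsometry (e n)) = hV.linearIsometry (W (e n))
    rw [hVe, hW, map_smul, hVe, mulOp_vfam y hy hp]
  intro x
  exact DFunLike.congr_fun key x
end
end

section
/- For every real a with 0 < a ≤ 1/√2 and every integer k ≥ 2, one has D(k+1) < D(k), where D(k) := √( ((k+1)²/(2k(k+2)) − a²) / (a⁴ − (5/2)a² + (k+1)²/(2k(k+2)) + (2k²+4k+3)/(4(k+1)²)) ). -/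
noncomputable section

/-- The threshold `D(k)` separating `k`-hyponormality from `(k+1)`-hyponormality. -/
def D (a : ℝ) (k : ℕ) : ℝ :=
  Real.sqrt ((((k : ℝ) + 1) ^ 2 / (2 * (k : ℝ) * ((k : ℝ) + 2)) - a ^ 2) /
    (a ^ 4 - (5 / 2) * a ^ 2 + ((k : ℝ) + 1) ^ 2 / (2 * (k : ℝ) * ((k : ℝ) + 2)) +
      (2 * (k : ℝ) ^ 2 + 4 * (k : ℝ) + 3) / (4 * ((k : ℝ) + 1) ^ 2)))

theorem aux_ratio (t n m : ℝ) (ht : 0 ≤ t) (hn : 1 < n) (hm : n < m) :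
    (t + 1 / (2 * (m - 1))) / (t * (3 / 2 + t) + 1 / (2 * (m - 1)) + 1 / (4 * m)) <
    (t + 1 / (2 * (n - 1))) / (t * (3 / 2 + t) + 1 / (2 * (n - 1)) + 1 / (4 * n)) := by
  have hn1 : 0 < n - 1 := by linarith
  have hm1 : 0 < m - 1 := by linarith
  have hn0 : 0 < n := by linarith
  have hm0 : 0 < m := by linarith
  have hd : 0 < m - n := by linarith
  rw [div_lt_div_iff₀ (by positivity) (by positivity)]
  have h1 : 1 / (2 * (n - 1)) - 1 / (2 * (m - 1)) = (m - n) / (2 * ((n - 1) * (m - 1))) := by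
    field_simp
    ring
  have h2 : 1 / (4 * n) - 1 / (4 * m) = (m - n) / (4 * (n * m)) := by
    field_simp
  have h3 : 1 / (2 * (n - 1)) * (1 / (4 * m)) - 1 / (2 * (m - 1)) * (1 / (4 * n))
      = (m - n) / (8 * ((n - 1) * (m - 1) * n * m)) := by
    field_simp
    ring
  have h4 : 0 < (m - n) / (8 * ((n - 1) * (m - 1) * n * m)) := by positivity
  have h5 : (m - n) / (4 * (n * m)) ≤ (m - n) / (4 * ((n - 1) * (m - 1))) := by
    apply div_le_div_of_nonneg_left hd.le (by positivity)
    nlinarith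
  have h6 : (m - n) / (4 * ((n - 1) * (m - 1))) = (m - n) / (2 * ((n - 1) * (m - 1))) * (1 / 2) := by
    field_simp
    norm_num
  have h7 : 0 < (m - n) / (2 * ((n - 1) * (m - 1))) := by positivity
  rw [← h3] at h4
  rw [h6, ← h1, ← h2] at h5
  rw [← h1] at h7
  generalize 1 / (2 * (n - 1)) = u at *
  generalize 1 / (2 * (m - 1)) = u' at *
  generalize 1 / (4 * n) = v at *
  generalize 1 / (4 * m) = v' at *
  nlinarith [mul_nonneg ht (sub_nonneg.2 h5), mul_nonneg (mul_nonneg ht ht) h7.le]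

theorem D_eq_aux (a : ℝ) (k : ℕ) (hk : 1 ≤ k) :
    D a k = Real.sqrt (((1 / 2 - a ^ 2) + 1 / (2 * (((k : ℝ) + 1) ^ 2 - 1))) /
      ((1 / 2 - a ^ 2) * (3 / 2 + (1 / 2 - a ^ 2)) + 1 / (2 * (((k : ℝ) + 1) ^ 2 - 1))
        + 1 / (4 * ((k : ℝ) + 1) ^ 2))) := by
  have h0 : (1 : ℝ) ≤ k := by exact_mod_cast hk
  have e : ((k : ℝ) + 1) ^ 2 - 1 = k * (k + 2) := by ring
  have e1 : ((k : ℝ) + 1) ^ 2 / (2 * (k : ℝ) * ((k : ℝ) + 2))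
      = 1 / 2 + 1 / (2 * (k * ((k : ℝ) + 2))) := by
    field_simp
    ring
  have e2 : (2 * (k : ℝ) ^ 2 + 4 * (k : ℝ) + 3) / (4 * ((k : ℝ) + 1) ^ 2)
      = 1 / 2 + 1 / (4 * ((k : ℝ) + 1) ^ 2) := by
    field_simp
    ring
  rw [D, e, e1, e2]
  congr 2 <;> ring

/-- For `0 < a ≤ 1/√2` and every integer `k ≥ 2`, one has `D(k+1) < D(k)`. -/
theorem D_strict_anti (a : ℝ) (ha : 0 < a) (ha' : a ≤ 1 / Real.sqrt 2)
    (k : ℕ) (hk : 2 ≤ k) :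
    D a (k + 1) < D a k := by
  have h2 : a ^ 2 ≤ 1 / 2 := by
    calc a ^ 2 ≤ (1 / Real.sqrt 2) ^ 2 := by gcongr
      _ = 1 / 2 := by rw [div_pow, Real.sq_sqrt (by norm_num)]; norm_num
  have h0 : (2 : ℝ) ≤ k := by exact_mod_cast hk
  rw [D_eq_aux a k (by omega), D_eq_aux a (k + 1) (by omega)]
  have hnm : ((k : ℝ) + 1) ^ 2 < (((k + 1 : ℕ) : ℝ) + 1) ^ 2 := by
    push_cast
    nlinarith
  have hn : (1 : ℝ) < ((k : ℝ) + 1) ^ 2 := by nlinarith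
  apply Real.sqrt_lt_sqrt
  · have : 0 ≤ 1 / 2 - a ^ 2 := by linarith
    have : 0 < (((k + 1 : ℕ) : ℝ) + 1) ^ 2 - 1 := by linarith
    positivity
  · exact aux_ratio _ _ _ (by linarith) hn hnm
end
end

section
/- For every real a with 0 < a ≤ 1/√2 and every integer n ≥ 1, the 2×2 real symmetric matrix with entries [(2n+5)/(2(n+2)³(n+3)), a²/(n+2)²; a²/(n+2)², a²(1 − ((n+2)/(2(n+1)))a²)] is positive semidefinite. -/
noncomputable section

/-- For `0 < a ≤ 1/√2` and every integer `n ≥ 1`, the 2×2 real symmetric matrix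
`[(2n+5)/(2(n+2)³(n+3)), a²/(n+2)²; a²/(n+2)², a²(1 − ((n+2)/(2(n+1)))a²)]`
is positive semidefinite. -/
theorem hyponormality_test_matrix_psd (a : ℝ) (ha : 0 < a) (ha' : a ≤ 1 / Real.sqrt 2)
    (n : ℕ) (hn : 1 ≤ n) :
    Matrix.PosSemidef
      !![(2 * (n : ℝ) + 5) / (2 * ((n : ℝ) + 2) ^ 3 * ((n : ℝ) + 3)),
          a ^ 2 / ((n : ℝ) + 2) ^ 2;
        a ^ 2 / ((n : ℝ) + 2) ^ 2,
          a ^ 2 * (1 - (((n : ℝ) + 2) / (2 * ((n : ℝ) + 1))) * a ^ 2)] := by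
  have ht : a ^ 2 ≤ 1 / 2 := by
    have h := pow_le_pow_left₀ ha.le ha' 2
    rwa [div_pow, Real.sq_sqrt (by norm_num), one_pow] at h
  have ht0 : 0 < a ^ 2 := by positivity
  have hm : (1 : ℝ) ≤ n := by exact_mod_cast hn
  generalize a ^ 2 = t at ht ht0 ⊢
  generalize (n : ℝ) = m at hm ⊢
  have hA : 1 / (m + 2) ^ 4 ≤ (2 * m + 5) / (2 * (m + 2) ^ 3 * (m + 3)) := by
    rw [div_le_div_iff₀ (by positivity) (by positivity)]
    have h3 : 0 ≤ (m + 2) ^ 3 := by positivity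
    have h4 : 0 ≤ (2 * m + 5) * (m + 2) - 2 * (m + 3) := by nlinarith
    nlinarith [mul_nonneg h3 h4]
  have hA0 : 0 < (2 * m + 5) / (2 * (m + 2) ^ 3 * (m + 3)) := by positivity
  have hc : (m + 2) / (2 * (m + 1)) ≤ 1 := by
    rw [div_le_one (by positivity)]; linarith
  have hD : t * (1 / 2) ≤ t * (1 - (m + 2) / (2 * (m + 1)) * t) := by
    apply mul_le_mul_of_nonneg_left _ ht0.le
    nlinarith
  have hB : (t / (m + 2) ^ 2) ^ 2 ≤ 1 / (m + 2) ^ 4 * (t * (1 / 2)) := by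
    have e : (t / (m + 2) ^ 2) ^ 2 = 1 / (m + 2) ^ 4 * (t * t) := by
      field_simp
    rw [e]
    gcongr
  have hdet := hB.trans (mul_le_mul hA hD (by positivity) hA0.le)
  generalize (2 * m + 5) / (2 * (m + 2) ^ 3 * (m + 3)) = A at *
  generalize t * (1 - (m + 2) / (2 * (m + 1)) * t) = D at *
  generalize t / (m + 2) ^ 2 = B at *
  refine Matrix.PosSemidef.of_dotProduct_mulVec_nonneg ?_ ?_
  · ext i j
    fin_cases i <;> fin_cases j <;> simp
  · intro x
    simp [Matrix.mulVec, dotProduct, Fin.sum_univ_two]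
    refine nonneg_of_mul_nonneg_right ?_ hA0
    nlinarith [sq_nonneg (A * x 0 + B * x 1), mul_nonneg (sub_nonneg.2 hdet) (sq_nonneg (x 1))]
end
end
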